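/- Let (x,t) be a DSIC, deterministic (hence agent-independent) social choice mechanism on a type domain 𝒰 ⊆ ∏_i U_i in which each U_i consists of types satisfying (S1),(S2) and has unrestricted willingness to pay. Then (x,t) satisfies IR and no subsidy if and only if for every agent i and every u_{-i} ∈ 𝒰_{-i}, the agent-independent prices satisfy: (i) t_{i,a}(u_{-i}) ≥ 0 for every a ∈ A, and (ii) there exists a ∈ A with t_{i,a}(u_{-i}) = 0 (i.e. the prices are standard). -/

import Mathlib

/-!
Common framework: agents indexed by `I`, alternatives `A` (finite, nonempty).
A type of an agent is a family `u : A → ℝ → ℝ`, where `u a z` is the utility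
when alternative `a` is selected and the agent pays `z`.
-/

noncomputable section

namespace NQLSC

/-- A type (utility family) of an agent. -/
abbrev Util (A : Type*) := A → ℝ → ℝ

variable {A I : Type*}

/-- (S1): each `u a` is continuous and strictly decreasing in the payment. -/
def S1 (u : Util A) : Prop := ∀ a, Continuous (u a) ∧ StrictAnti (u a)

/-- `min_{a'∈A} u_{a'}(0)`, the value of the worst alternative at zero payment. -/
def minVal [Fintype A] [Nonempty A] (u : Util A) : ℝ :=
  Finset.univ.inf' Finset.univ_nonempty (fun a => u a 0)

/-- (S2): as the payment tends to `+∞`, the utility of every alternative drops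
(strictly) below `min_{a'} u_{a'}(0)`; for strictly decreasing utilities this is
equivalent to the utility being below that value at some payment. -/
def S2 [Fintype A] [Nonempty A] (u : Util A) : Prop :=
  ∀ a, ∃ z : ℝ, u a z < minVal u

/-- The willingness to pay `p_a = u_a⁻¹(min_{a'} u_{a'}(0))` (under (S1),(S2) this
`sInf` is the unique payment at which `u a` attains `minVal u`). -/
def wtp [Fintype A] [Nonempty A] (u : Util A) (a : A) : ℝ :=
  sInf {z : ℝ | u a z ≤ minVal u}

/-- A parallel type: (S1), (S2), and for all `a, b` with `v_a ≥ v_b` and all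
`z ∈ [0, p_b]`, `u_a (z + (p_a − p_b)) = u_b z`. -/
def IsParallel [Fintype A] [Nonempty A] (u : Util A) : Prop :=
  S1 u ∧ S2 u ∧ ∀ a b : A, u b 0 ≤ u a 0 → ∀ z : ℝ, 0 ≤ z → z ≤ wtp u b →
    u a (z + (wtp u a - wtp u b)) = u b z

/-- Unrestricted willingness to pay: every nonnegative vector with a zero entry is
the willingness-to-pay vector of some type in the domain. -/
def UnrestrictedWTP [Fintype A] [Nonempty A] (U : Set (Util A)) : Prop :=
  ∀ lam : A → ℝ, (∀ a, 0 ≤ lam a) → (∃ a, lam a = 0) →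
    ∃ u ∈ U, ∀ a, wtp u a = lam a

/-- Dominant-strategy incentive compatibility of a (deterministic) mechanism `(x,t)`
on the domain `𝒰 = ∏ i, U i`. -/
def DSIC [DecidableEq I] (U : I → Set (Util A)) (x : (I → Util A) → A)
    (t : (I → Util A) → I → ℝ) : Prop :=
  ∀ uh : I → Util A, (∀ j, uh j ∈ U j) → ∀ i, ∀ ui ∈ U i,
    ui (x uh) (t uh i) ≤
      ui (x (Function.update uh i ui)) (t (Function.update uh i ui) i)

/-- Individual rationality. -/
def IR [Fintype A] [Nonempty A] [DecidableEq I] (U : I → Set (Util A))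
    (x : (I → Util A) → A) (t : (I → Util A) → I → ℝ) : Prop :=
  ∀ uh : I → Util A, (∀ j, uh j ∈ U j) → ∀ i, ∀ ui ∈ U i,
    minVal ui ≤ ui (x (Function.update uh i ui)) (t (Function.update uh i ui) i)

/-- No subsidy: the mechanism never makes positive transfers to an agent. -/
def NoSubsidy (U : I → Set (Util A)) (t : (I → Util A) → I → ℝ) : Prop :=
  ∀ u : I → Util A, (∀ j, u j ∈ U j) → ∀ i, 0 ≤ t u i

/-- Ontoness of the choice rule on the given domain. -/
def OntoMech (U : I → Set (Util A)) (x : (I → Util A) → A) : Prop :=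
  ∀ a, ∃ u : I → Util A, (∀ j, u j ∈ U j) ∧ x u = a

theorem minVal_le [Fintype A] [Nonempty A] (u : Util A) (a : A) : minVal u ≤ u a 0 :=
  Finset.inf'_le (fun a => u a 0) (Finset.mem_univ a)

/-- Paying strictly more than the willingness to pay is worse than the worst alternative for
free. -/
theorem lt_minVal_of_wtp_lt [Fintype A] [Nonempty A] {u : Util A} (h1 : S1 u) (h2 : S2 u)
    {a : A} {z : ℝ} (h : wtp u a < z) : u a z < minVal u := by
  obtain ⟨w, hw⟩ := h2 a
  obtain ⟨y, hy, hyz⟩ := exists_lt_of_csInf_lt ⟨w, hw.le⟩ h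
  exact ((h1 a).2 hyz).trans_le hy

/-- For a DSIC deterministic mechanism on a domain of (S1),(S2) types
with unrestricted willingness to pay, IR together with no subsidy holds iff for every
agent `i` and every profile of the others, the agent-independent prices are standard:
every attainable payment of agent `i` is nonnegative, and some report yields payment 0. -/
theorem standard_prices_characterization
    [Fintype A] [Nonempty A] [DecidableEq I]
    (U : I → Set (Util A))
    (hS : ∀ i, ∀ u ∈ U i, S1 u ∧ S2 u)
    (hunr : ∀ i, UnrestrictedWTP (U i))
    (x : (I → Util A) → A) (t : (I → Util A) → I → ℝ)
    (hDSIC : DSIC U x t) :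
    (IR U x t ∧ NoSubsidy U t) ↔
      ∀ uh : I → Util A, (∀ j, uh j ∈ U j) → ∀ i,
        (∀ ui ∈ U i, 0 ≤ t (Function.update uh i ui) i) ∧
        (∃ ui ∈ U i, t (Function.update uh i ui) i = 0) := by
  have hupd : ∀ uh : I → Util A, (∀ j, uh j ∈ U j) → ∀ i, ∀ ui ∈ U i,
      ∀ j, Function.update uh i ui j ∈ U j := by
    intro uh huh i ui hui j
    rcases eq_or_ne j i with rfl | hj
    · simpa using hui
    · simpa [hj] using huh j
  constructor
  · rintro ⟨hIR, hNS⟩ uh huh i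
    refine ⟨fun ui hui => hNS _ (hupd uh huh i ui hui) i, ?_⟩
    obtain ⟨u, hu, hwtp⟩ := hunr i (fun _ => 0) (fun _ => le_rfl) ⟨Classical.arbitrary A, rfl⟩
    refine ⟨u, hu, le_antisymm ?_ (hNS _ (hupd uh huh i u hu) i)⟩
    by_contra! hpos
    exact (hIR uh huh i u hu).not_gt
      (lt_minVal_of_wtp_lt (hS i u hu).1 (hS i u hu).2 ((hwtp _).trans_lt hpos))
  · intro h
    refine ⟨fun uh huh i ui hui => ?_, fun u hu i => ?_⟩
    · obtain ⟨w, hw, hzero⟩ := (h uh huh i).2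
      have hle := hDSIC _ (hupd uh huh i w hw) i ui hui
      rw [Function.update_idem, hzero] at hle
      exact (minVal_le ui _).trans hle
    · simpa using (h u hu i).1 (u i) (hu i)
end NQLSC
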